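/- arXiv:2502.07602 — 5 statements merged into one kernel-verified Lean document; each statement's English description precedes it below -/
import Mathlib

section
/- Let K ≥ 1 be an integer and let α_0, α_1, …, α_K be positive real numbers. With t_{i,j} and s_{i,j} defined as in the context, for every pair of indices with 2 ≤ i ≤ K−1 and 0 ≤ j ≤ i−2 one has s_{i+1,j} = ((α_i − 1)/α_{i+1}) · s_{i,j}. -/
/-!
Along a column, `x = t_{i-1,j}`, `y = t_{i,j}` and `c = 2α_j` satisfy `c - x = α_i (y - x)`, so the
remaining gap is `c - y = (c - x) - (y - x) = (α_i - 1)(y - x)`. The next increment is this gap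
divided by `α_{i+1}`.
-/

theorem sub_eq_of_eq_add_sum_Icc {M : Type*} [AddCommGroup M] {u f : ℕ → M} {m N : ℕ}
    (hu : ∀ i, m ≤ i → i < N → u (i + 1) = u m + ∑ k ∈ Finset.Icc m i, f k)
    {i : ℕ} (hmi : m ≤ i) (hi : i < N) : u (i + 1) - u i = f i := by
  rw [sub_eq_iff_eq_add']
  rcases hmi.eq_or_lt with rfl | hlt
  · simpa only [Finset.Icc_self, Finset.sum_singleton] using hu m le_rfl hi
  · obtain ⟨n, rfl⟩ := Nat.exists_eq_add_one_of_ne_zero (Nat.ne_zero_of_lt hlt)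
    rw [hu (n + 1) hmi hi, Finset.sum_Icc_succ_top hmi, ← add_assoc,
      ← hu n (Nat.le_of_lt_succ hlt) (Nat.lt_of_succ_lt hi)]

theorem sub_eq_sub_one_mul_sub_of_sub_eq_div {F : Type*} [Field F] {a c x y : F} (ha : a ≠ 0)
    (h : y - x = (c - x) / a) : c - y = (a - 1) * (y - x) := by
  have hmul : (y - x) * a = c - x := (eq_div_iff ha).mp h
  linear_combination -hmul

theorem stmt_1_general {F : Type*} [Field F] {K : ℕ} {α c : ℕ → F} {t s : ℕ → ℕ → F}
    (hα : ∀ k, 0 < k → k ≤ K → α k ≠ 0)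
    (ht : ∀ i j, j < i → i < K →
      t (i + 1) j = t (j + 1) j + ∑ k ∈ Finset.Icc (j + 1) i, (c j - t k j) / α (k + 1))
    (hs : ∀ i j, j < i → i < K → s (i + 1) j = t (i + 1) j - t i j)
    {i j : ℕ} (hi : i < K) (hj : j + 2 ≤ i) :
    s (i + 1) j = (α i - 1) / α (i + 1) * s i j := by
  have increment : ∀ n, j < n → n < K →
      t (n + 1) j - t n j = (c j - t n j) / α (n + 1) := fun n hjn hn =>
    sub_eq_of_eq_add_sum_Icc (u := fun n => t n j) (fun i hji => ht i j hji) hjn hn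
  obtain ⟨n, rfl⟩ : ∃ n, i = n + 1 := ⟨i - 1, by lia⟩
  have hjn : j < n := by lia
  have hn : n < K := by lia
  have gap : c j - t (n + 1) j = (α (n + 1) - 1) * (t (n + 1) j - t n j) :=
    sub_eq_sub_one_mul_sub_of_sub_eq_div (hα (n + 1) n.succ_pos hn) (increment n hjn hn)
  rw [hs (n + 1) j (by lia) hi, hs n j hjn hn, increment (n + 1) (by lia) hi, gap,
    div_mul_eq_mul_div]

/-- Lemma 16 of Jang–Gupta–Ryu (second part, first case), as used in the paper:
for `2 ≤ i ≤ K - 1` and `0 ≤ j ≤ i - 2`,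
`s_{i+1,j} = ((α_i - 1)/α_{i+1}) · s_{i,j}`. -/
theorem stmt_1 (K : ℕ) (hK : 1 ≤ K) (α : ℕ → ℝ)
    (hα : ∀ k, k ≤ K → 0 < α k)
    (t s : ℕ → ℕ → ℝ)
    (ht_diag : ∀ i, i < K → t (i + 1) i = 1 + (2 * α i - 1) / α (i + 1))
    (ht_off : ∀ i j, j < i → i < K →
      t (i + 1) j = t (j + 1) j + ∑ k ∈ Finset.Icc (j + 1) i, (2 * α j - t k j) / α (k + 1))
    (hs_off : ∀ i j, j < i → i < K → s (i + 1) j = t (i + 1) j - t i j)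
    (hs_diag : ∀ i, i < K → s (i + 1) i = t (i + 1) i) :
    ∀ i j, 2 ≤ i → i < K → j + 2 ≤ i →
      s (i + 1) j = (α i - 1) / α (i + 1) * s i j :=
  fun _ _ _ hi hj =>
    stmt_1_general (c := fun j => 2 * α j) (fun k _ hk => (hα k hk).ne') ht_off hs_off hi hj
end

section
/- Let K ≥ 2 be an integer and let α_0,…,α_K be the specific sequence defined in the context. With t_{i,j} defined as in the context, for every index j with 0 ≤ j ≤ K−2 one has (α_{j+1}/(2α_j − 1)) · (t_{K,j} − 1) − 1 = ((α_{j+1} − 1)/(2α_{j+1} − 1)) · (t_{K,j+1} − 1). -/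
/-!
Column `j` of `t` starts as if from `t_{j,j} = 1`, and each step moves the entry towards `2α_j` by
the fraction `1/α_{i+1}` of the remaining distance. Hence
`(t_{K,j} - 1)/(2α_j - 1) = 1 - P_j` with `P_j = ∏_{k=j+1}^{K} (1 - 1/α_k)`. Since
`α_{j+1} P_j = (α_{j+1} - 1) P_{j+1}`, both sides of the claim equal
`(α_{j+1} - 1)(1 - P_{j+1})`.
-/

section FiniteRecurrences

open Finset

theorem eq_add_of_eq_add_sum_Icc {M : Type*} [AddCommMonoid M] {u f : ℕ → M} {m n : ℕ}
    (h : ∀ i, m ≤ i → i < n → u (i + 1) = u m + ∑ k ∈ Icc m i, f k)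
    {i : ℕ} (hmi : m ≤ i) (hin : i < n) : u (i + 1) = u i + f i := by
  rw [h i hmi hin]
  rcases hmi.eq_or_lt with rfl | hlt
  · rw [Icc_self, sum_singleton]
  · obtain ⟨l, rfl⟩ := Nat.exists_eq_add_one_of_ne_zero (Nat.ne_zero_of_lt hlt)
    rw [sum_Icc_succ_top hmi, ← add_assoc, ← h l (by lia) (by lia)]

theorem sub_eq_mul_prod_Ico_one_sub {R : Type*} [CommRing R] {u w : ℕ → R} {a : R} {m n : ℕ}
    (hmn : m ≤ n) (h : ∀ i, m ≤ i → i < n → u (i + 1) = u i + (a - u i) * w i) :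
    a - u n = (a - u m) * ∏ k ∈ Ico m n, (1 - w k) := by
  induction n, hmn using Nat.le_induction with
  | base => rw [Ico_self, prod_empty, mul_one]
  | succ n hmn ih =>
    have ih := ih fun i hmi hin => h i hmi (by lia)
    rw [prod_Ico_succ_top hmn, ← mul_assoc, ← ih, h n hmn n.lt_succ_self]
    ring

variable {F : Type*} [Field F] {α : ℕ → F}

theorem sub_one_div_sub_one_eq_one_sub_prod_Ico {u : ℕ → F} {a : F} {j n : ℕ} (ha : a ≠ 1)
    (hjn : j < n) (hu : u (j + 1) = 1 + (a - 1) / α (j + 1))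
    (hsum : ∀ i, j < i → i < n →
      u (i + 1) = u (j + 1) + ∑ k ∈ Icc (j + 1) i, (a - u k) / α (k + 1)) :
    (u n - 1) / (a - 1) = 1 - ∏ k ∈ Ico j n, (1 - (α (k + 1))⁻¹) := by
  have hstep : ∀ i, j + 1 ≤ i → i < n → u (i + 1) = u i + (a - u i) * (α (i + 1))⁻¹ := by
    intro i hji hin
    rw [eq_add_of_eq_add_sum_Icc hsum hji hin, div_eq_mul_inv]
  have hfirst : a - u (j + 1) = (a - 1) * (1 - (α (j + 1))⁻¹) := by
    rw [hu]
    ring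
  have hdist : a - u n = (a - 1) * ∏ k ∈ Ico j n, (1 - (α (k + 1))⁻¹) := by
    rw [sub_eq_mul_prod_Ico_one_sub hjn hstep, hfirst, mul_assoc, prod_eq_prod_Ico_succ_bot hjn]
  rw [div_eq_iff (sub_ne_zero.mpr ha)]
  linear_combination -hdist

theorem mul_one_sub_prod_Ico_sub_one {j n : ℕ} (hjn : j < n) (hα : α (j + 1) ≠ 0) :
    α (j + 1) * (1 - ∏ k ∈ Ico j n, (1 - (α (k + 1))⁻¹)) - 1 =
      (α (j + 1) - 1) * (1 - ∏ k ∈ Ico (j + 1) n, (1 - (α (k + 1))⁻¹)) := by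
  rw [prod_eq_prod_Ico_succ_bot hjn]
  field_simp
  ring

theorem stmt_3_general {K : ℕ} {t : ℕ → ℕ → F}
    (hα_ne_zero : ∀ k, 0 < k → k ≤ K → α k ≠ 0) (hα_ne_half : ∀ k, k < K → 2 * α k ≠ 1)
    (ht_diag : ∀ i, i < K → t (i + 1) i = 1 + (2 * α i - 1) / α (i + 1))
    (ht_off : ∀ i j, j < i → i < K →
      t (i + 1) j = t (j + 1) j + ∑ k ∈ Icc (j + 1) i, (2 * α j - t k j) / α (k + 1))
    {j : ℕ} (hj : j + 1 < K) :
    α (j + 1) / (2 * α j - 1) * (t K j - 1) - 1 =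
      (α (j + 1) - 1) / (2 * α (j + 1) - 1) * (t K (j + 1) - 1) := by
  have hcol : ∀ l, l < K →
      (t K l - 1) / (2 * α l - 1) = 1 - ∏ k ∈ Ico l K, (1 - (α (k + 1))⁻¹) := fun l hl =>
    sub_one_div_sub_one_eq_one_sub_prod_Ico (u := (t · l)) (hα_ne_half l hl) hl (ht_diag l hl)
      fun i => ht_off i l
  rw [div_mul_eq_mul_div, div_mul_eq_mul_div, mul_div_assoc, mul_div_assoc,
    hcol j (by lia), hcol (j + 1) hj]
  exact mul_one_sub_prod_Ico_sub_one (by lia) (hα_ne_zero (j + 1) j.succ_pos hj.le)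

end FiniteRecurrences

theorem one_le_one_add_sqrt_one_add_div_two {x : ℝ} (hx : 0 ≤ x) : 1 ≤ (1 + √(1 + x)) / 2 := by
  have : 1 ≤ √(1 + x) := Real.one_le_sqrt.mpr (le_add_of_nonneg_right hx)
  linarith

theorem one_le_of_sqrt_recurrence {K : ℕ} {α : ℕ → ℝ} (hα0 : 1 ≤ α 0)
    (hαmid : ∀ k, 1 ≤ k → k < K → α k = (1 + √(1 + 4 * α (k - 1) ^ 2)) / 2)
    (hαK : α K = (1 + √(1 + 8 * α (K - 1) ^ 2)) / 2) {k : ℕ} (hk : k ≤ K) : 1 ≤ α k := by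
  rcases hk.eq_or_lt with rfl | hlt
  · exact hαK ▸ one_le_one_add_sqrt_one_add_div_two (by positivity)
  · rcases k.eq_zero_or_pos with rfl | hpos
    · exact hα0
    · exact hαmid k hpos hlt ▸ one_le_one_add_sqrt_one_add_div_two (by positivity)

/-- Lemma 18 of Jang–Gupta–Ryu, as used in the paper: with the specific
sequence `α` of the (I)OptISTA algorithm and `t` defined by the recursions of
the context, for `0 ≤ j ≤ K - 2`,
`(α_{j+1}/(2α_j - 1))(t_{K,j} - 1) - 1 = ((α_{j+1} - 1)/(2α_{j+1} - 1))(t_{K,j+1} - 1)`. -/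
theorem stmt_3 (K : ℕ) (hK : 2 ≤ K) (α : ℕ → ℝ)
    (hα0 : α 0 = 1)
    (hαmid : ∀ k, 1 ≤ k → k < K →
      α k = (1 + Real.sqrt (1 + 4 * α (k - 1) ^ 2)) / 2)
    (hαK : α K = (1 + Real.sqrt (1 + 8 * α (K - 1) ^ 2)) / 2)
    (t : ℕ → ℕ → ℝ)
    (ht_diag : ∀ i, i < K → t (i + 1) i = 1 + (2 * α i - 1) / α (i + 1))
    (ht_off : ∀ i j, j < i → i < K →
      t (i + 1) j = t (j + 1) j + ∑ k ∈ Finset.Icc (j + 1) i, (2 * α j - t k j) / α (k + 1)) :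
    ∀ j, j ≤ K - 2 →
      α (j + 1) / (2 * α j - 1) * (t K j - 1) - 1
        = (α (j + 1) - 1) / (2 * α (j + 1) - 1) * (t K (j + 1) - 1) := by
  have hα (k : ℕ) (hk : k ≤ K) : 1 ≤ α k := one_le_of_sqrt_recurrence hα0.ge hαmid hαK hk
  exact fun j hj => stmt_3_general (fun k _ hk => (zero_lt_one.trans_le (hα k hk)).ne')
    (fun k hk => ne_of_gt (by linarith [hα k hk.le])) ht_diag ht_off (by lia)
end

section
/- Let K ≥ 1 be an integer and let α_0,…,α_K be the specific sequence defined in the context. With t_{i,j} defined as in the context, for every index j with 0 ≤ j ≤ K−1 one has t_{K,j} = (2α_j/α_K²) · (α_K² − 2α_j² + α_j); that is, the step sizes γ_j = (2α_j/α_K²)(α_K² − 2α_j² + α_j) of the IOptISTA algorithm coincide with the coefficients t_{K,j}. -/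
/-!
For fixed `j`, every `t_{i+1,j}` arises from `t_{i,j}` by moving the fraction `1 / α_{i+1}` of the
way towards `2α_j`; the diagonal formula is the same step started from the value `1`. Since
`α_{i+1}² - α_{i+1} = α_i²`, such a step preserves `α_i² (2α_j - t_{i,j})`, whose initial value is
`α_j² (2α_j - 1)`. The last step, where `α_K² - α_K = 2α_{K-1}²`, doubles it, and solving
`α_K² (2α_j - t_{K,j}) = 2 α_j² (2α_j - 1)` for `t_{K,j}` gives `γ_j`.
-/

theorem succ_eq_add_of_eq_add_sum_Icc {M : Type*} [AddCommMonoid M] {u f : ℕ → M} {m N : ℕ}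
    (hu : ∀ i, m ≤ i → i < N → u (i + 1) = u m + ∑ k ∈ Finset.Icc m i, f k)
    {i : ℕ} (hmi : m ≤ i) (hiN : i < N) :
    u (i + 1) = u i + f i := by
  obtain rfl | hlt := hmi.eq_or_lt
  · simpa only [Finset.Icc_self, Finset.sum_singleton] using hu m le_rfl hiN
  · obtain ⟨n, rfl⟩ := Nat.exists_eq_succ_of_ne_zero (Nat.ne_zero_of_lt hlt)
    rw [hu (n + 1) hmi hiN, Finset.sum_Icc_succ_top hmi, ← add_assoc,
      hu n (Nat.le_of_lt_succ hlt) (by omega)]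

section Field

variable {F : Type*} [Field F]

theorem sq_mul_sub_add_div {a : F} (ha : a ≠ 0) (L x : F) :
    a ^ 2 * (L - (x + (L - x) / a)) = (a ^ 2 - a) * (L - x) := by
  field_simp
  ring

-- The factor `c` covers both an ordinary step (`c = 1`) and the modified last step (`c = 2`).
theorem sq_mul_sub_eq_of_averaging {a x : ℕ → F} {L x₀ : F} {j n : ℕ} (hjn : j ≤ n)
    (ha_ne : ∀ k, j ≤ k → k ≤ n → a (k + 1) ≠ 0)
    (ha : ∀ k, j ≤ k → k < n → a (k + 1) ^ 2 - a (k + 1) = a k ^ 2)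
    (hx_init : x (j + 1) = x₀ + (L - x₀) / a (j + 1))
    (hx_step : ∀ k, j < k → k ≤ n → x (k + 1) = x k + (L - x k) / a (k + 1))
    {c : F} (hc : a (n + 1) ^ 2 - a (n + 1) = c * a n ^ 2) :
    a (n + 1) ^ 2 * (L - x (n + 1)) = c * (a j ^ 2 * (L - x₀)) := by
  induction n, hjn using Nat.le_induction generalizing c with
  | base =>
    rw [hx_init, sq_mul_sub_add_div (ha_ne j le_rfl le_rfl), hc, mul_assoc]
  | succ n hjn ih =>
    have invariant : a (n + 1) ^ 2 * (L - x (n + 1)) = a j ^ 2 * (L - x₀) := by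
      simpa only [one_mul] using
        ih (fun k hjk hkn => ha_ne k hjk (by omega)) (fun k hjk hkn => ha k hjk (by omega))
          (fun k hjk hkn => hx_step k hjk (by omega))
          ((ha n hjn n.lt_succ_self).trans (one_mul _).symm)
    rw [hx_step (n + 1) (by omega) le_rfl, sq_mul_sub_add_div (ha_ne (n + 1) (by omega) le_rfl),
      hc, mul_assoc, invariant]

theorem stmt_4_general (K : ℕ) (α : ℕ → F)
    (hα_ne : ∀ k, 1 ≤ k → k ≤ K → α k ≠ 0)
    (hαmid : ∀ k, 1 ≤ k → k < K → α k ^ 2 - α k = α (k - 1) ^ 2)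
    (hαK : α K ^ 2 - α K = 2 * α (K - 1) ^ 2)
    (t : ℕ → ℕ → F)
    (ht_diag : ∀ i, i < K → t (i + 1) i = 1 + (2 * α i - 1) / α (i + 1))
    (ht_off : ∀ i j, j < i → i < K →
      t (i + 1) j = t (j + 1) j + ∑ k ∈ Finset.Icc (j + 1) i, (2 * α j - t k j) / α (k + 1)) :
    ∀ j, j < K →
      t K j = 2 * α j / α K ^ 2 * (α K ^ 2 - 2 * α j ^ 2 + α j) := by
  intro j hj
  obtain ⟨n, rfl⟩ := Nat.exists_eq_succ_of_ne_zero (Nat.ne_zero_of_lt hj)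
  have t_step (k : ℕ) (hjk : j < k) (hkn : k ≤ n) :
      t (k + 1) j = t k j + (2 * α j - t k j) / α (k + 1) :=
    succ_eq_add_of_eq_add_sum_Icc (u := (t · j)) (fun i => ht_off i j) hjk
      (Nat.lt_succ_of_le hkn)
  have scaled_gap : α (n + 1) ^ 2 * (2 * α j - t (n + 1) j) = 2 * (α j ^ 2 * (2 * α j - 1)) :=
    sq_mul_sub_eq_of_averaging (x := (t · j)) (Nat.le_of_lt_succ hj)
      (fun k _ hkn => hα_ne (k + 1) (by omega) (by omega))
      (fun k _ hkn => hαmid (k + 1) (by omega) (by omega)) (ht_diag j hj) t_step hαK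
  have hαn : α (n + 1) ≠ 0 := hα_ne (n + 1) (by omega) le_rfl
  field_simp
  linear_combination -scaled_gap

end Field

theorem ne_zero_of_eq_half_one_add_sqrt {d y : ℝ} (hy : y = (1 + √d) / 2) : y ≠ 0 := by
  rw [hy]
  positivity

theorem sq_sub_self_of_eq_half_one_add_sqrt {d y : ℝ} (hd : 0 ≤ d) (hy : y = (1 + √d) / 2) :
    y ^ 2 - y = (d - 1) / 4 := by
  rw [hy]
  linear_combination Real.sq_sqrt hd / 4

/-- With the specific sequence `α` of the (I)OptISTA algorithm and `t` defined
by the recursions of the context, for `0 ≤ j ≤ K - 1` the step sizes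
`γ_j = (2α_j/α_K²)(α_K² - 2α_j² + α_j)` coincide with the coefficients `t_{K,j}`. -/
theorem stmt_4 (K : ℕ) (hK : 1 ≤ K) (α : ℕ → ℝ)
    (hα0 : α 0 = 1)
    (hαmid : ∀ k, 1 ≤ k → k < K →
      α k = (1 + Real.sqrt (1 + 4 * α (k - 1) ^ 2)) / 2)
    (hαK : α K = (1 + Real.sqrt (1 + 8 * α (K - 1) ^ 2)) / 2)
    (t : ℕ → ℕ → ℝ)
    (ht_diag : ∀ i, i < K → t (i + 1) i = 1 + (2 * α i - 1) / α (i + 1))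
    (ht_off : ∀ i j, j < i → i < K →
      t (i + 1) j = t (j + 1) j + ∑ k ∈ Finset.Icc (j + 1) i, (2 * α j - t k j) / α (k + 1)) :
    ∀ j, j < K →
      t K j = 2 * α j / α K ^ 2 * (α K ^ 2 - 2 * α j ^ 2 + α j) :=
  stmt_4_general K α
    (fun k hk hkK => hkK.lt_or_eq.elim (fun h => ne_zero_of_eq_half_one_add_sqrt (hαmid k hk h))
      (fun h => h ▸ ne_zero_of_eq_half_one_add_sqrt hαK))
    (fun k hk hkK => by
      linear_combination sq_sub_self_of_eq_half_one_add_sqrt (by positivity) (hαmid k hk hkK))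
    (by linear_combination sq_sub_self_of_eq_half_one_add_sqrt (by positivity) hαK)
    t ht_diag ht_off
end

section
/- Consider the IOptISTA iterates as in the context, with positive reals α_0,…,α_K satisfying α_0 = 1 and arbitrary positive step parameters γ_0,…,γ_{K−1} and η_0,…,η_{K−1}, and let t_{i,j} be defined as in the context. Then for every i with 0 ≤ i ≤ K−1, the x-iterate satisfies the closed form x_{i+1} = x_0 − Σ_{j=0}^{i} t_{i+1,j} η_j W(∇f(x_j)) − Σ_{j=0}^{i} t_{i+1,j} η_j h'_{j+1}. -/
/-!
Put `d_k = (y_{k+1} - y_k) / γ_k`, so that `η_k (W(∇f(x_k)) + h'_{k+1}) = -d_k`. The point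
`w_k = z_k + α_k (x_k - z_k)` on the line through `z_k` and `x_k` moves by exactly `2 α_k d_k`,
hence `w_k = x_0 + ∑_{j<k} 2 α_j d_j`. In terms of `w`, the momentum step reads
`x_{k+1} = x_k + t_{k+1,k} d_k + (w_k - x_k) / α_{k+1}`: it pulls the coefficient of each old `d_j`
from `t_{k,j}` towards `2 α_j` by the fraction `1 / α_{k+1}`, which is the recurrence of `t`.
-/

open AffineMap Finset

theorem succ_eq_add_of_eq_add_sum_Icc_s6 {M : Type*} [AddCommMonoid M] {s b : ℕ → M} {j K : ℕ}
    (hs : ∀ i, j < i → i < K → s i = s j + ∑ k ∈ Icc (j + 1) i, b k)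
    {i : ℕ} (hji : j ≤ i) (hiK : i + 1 < K) : s (i + 1) = s i + b (i + 1) := by
  rw [hs (i + 1) (by lia) hiK, sum_Icc_succ_top (by lia), ← add_assoc]
  rcases hji.eq_or_lt with rfl | hlt
  · simp
  · rw [← hs i hlt (by lia)]

section Relaxation

variable {R E : Type*} [Ring R] [AddCommGroup E] [Module R E]

theorem eq_add_sum_range_smul_of_relaxation {K : ℕ} {x d : ℕ → E} {b β : ℕ → R} {t : ℕ → ℕ → R}
    (ht : ∀ k j, j < k → k < K → t (k + 1) j = t k j + β k * (b j - t k j))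
    (hx : ∀ k, k < K → x (k + 1) =
      x k + t (k + 1) k • d k + β k • (x 0 + ∑ j ∈ range k, b j • d j - x k)) :
    ∀ k, k ≤ K → x k = x 0 + ∑ j ∈ range k, t k j • d j := by
  intro k
  induction k with
  | zero => simp
  | succ k ih =>
    intro hk
    have old_terms : ∑ j ∈ range k, t (k + 1) j • d j = ∑ j ∈ range k, t k j • d j +
        β k • (∑ j ∈ range k, b j • d j - ∑ j ∈ range k, t k j • d j) := by
      rw [← sum_sub_distrib, smul_sum, ← sum_add_distrib]
      refine sum_congr rfl fun j hj => ?_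
      rw [ht k j (mem_range.mp hj) hk, add_smul, mul_smul, sub_smul]
    have gap : x 0 + ∑ j ∈ range k, b j • d j - x k =
        ∑ j ∈ range k, b j • d j - ∑ j ∈ range k, t k j • d j := by
      rw [ih (by lia), add_sub_add_left_eq_sub]
    rw [hx k hk, gap, sum_range_succ, old_terms]
    nth_rewrite 1 [ih (by lia)]
    abel

end Relaxation

section Momentum

variable {𝕜 E : Type*} [Field 𝕜] [AddCommGroup E] [Module 𝕜 E]

/-- The update of the `x`-iterate in IOptISTA: `a` and `b` are the current and the next
momentum parameter, `x` the current iterate, `z` and `z'` the current and the next auxiliary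
iterate. -/
def momentumStep (a b : 𝕜) (x z z' : E) : E :=
  z' + ((a - 1) / b) • (z' - z) + (a / b) • (z' - x)

theorem lineMap_momentumStep {a b : 𝕜} (hb : b ≠ 0) (x z d : E) :
    lineMap (x + d) (momentumStep a b x z (x + d)) b = lineMap z x a + (2 * a) • d := by
  simp only [lineMap_apply_module', momentumStep]
  match_scalars <;> field_simp <;> ring

theorem momentumStep_eq_add_smul_lineMap_sub (a b : 𝕜) (x z d : E) :
    momentumStep a b x z (x + d) =
      x + (1 + (2 * a - 1) / b) • d + b⁻¹ • (lineMap z x a - x) := by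
  simp only [lineMap_apply_module', momentumStep]
  match_scalars <;> ring

variable {K : ℕ} {α : ℕ → 𝕜} {x z d : ℕ → E}

theorem lineMap_eq_add_sum_of_momentumStep (hα : ∀ k, k < K → α (k + 1) ≠ 0) (hz0 : z 0 = x 0)
    (hz : ∀ k, k < K → z (k + 1) = x k + d k)
    (hx : ∀ k, k < K → x (k + 1) = momentumStep (α k) (α (k + 1)) (x k) (z k) (z (k + 1))) :
    ∀ k, k ≤ K → lineMap (z k) (x k) (α k) = x 0 + ∑ j ∈ range k, (2 * α j) • d j := by
  intro k
  induction k with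
  | zero => simp [hz0]
  | succ k ih =>
    intro hk
    rw [hx k hk, hz k hk, lineMap_momentumStep (hα k hk), ih (by lia), sum_range_succ, add_assoc]

theorem eq_add_sum_of_momentumStep {t : ℕ → ℕ → 𝕜}
    (hα : ∀ k, k < K → α (k + 1) ≠ 0)
    (ht_diag : ∀ i, i < K → t (i + 1) i = 1 + (2 * α i - 1) / α (i + 1))
    (ht_off : ∀ i j, j < i → i < K →
      t (i + 1) j = t (j + 1) j + ∑ k ∈ Icc (j + 1) i, (2 * α j - t k j) / α (k + 1))
    (hz0 : z 0 = x 0) (hz : ∀ k, k < K → z (k + 1) = x k + d k)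
    (hx : ∀ k, k < K → x (k + 1) = momentumStep (α k) (α (k + 1)) (x k) (z k) (z (k + 1))) :
    ∀ k, k ≤ K → x k = x 0 + ∑ j ∈ range k, t k j • d j := by
  refine eq_add_sum_range_smul_of_relaxation (b := fun j => 2 * α j)
    (β := fun k => (α (k + 1))⁻¹) (fun k j hjk hk => ?_) fun k hk => ?_
  · obtain ⟨i, rfl⟩ := Nat.exists_eq_add_one_of_ne_zero (Nat.ne_zero_of_lt hjk)
    rw [← div_eq_inv_mul]
    exact succ_eq_add_of_eq_add_sum_Icc_s6 (s := fun i => t (i + 1) j) (fun i => ht_off i j)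
      (Nat.le_of_lt_succ hjk) hk
  · rw [← lineMap_eq_add_sum_of_momentumStep hα hz0 hz hx k hk.le, ht_diag k hk,
      ← momentumStep_eq_add_smul_lineMap_sub, ← hz k hk, hx k hk]

theorem smul_add_smul_prox_residual {γ η : 𝕜} (hγ : γ ≠ 0) (hη : η ≠ 0) (v y y' : E) :
    η • v + η • (1 / (η * γ)) • (y - (η * γ) • v - y') = -((1 / γ) • (y' - y)) := by
  match_scalars <;> field_simp
  ring

end Momentum

theorem stmt_6_general {𝕜 E : Type*} [Field 𝕜] [AddCommGroup E] [Module 𝕜 E] {K : ℕ}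
    {α γ η : ℕ → 𝕜} (hα : ∀ k, k < K → α (k + 1) ≠ 0)
    (hγ : ∀ k, k < K → γ k ≠ 0) (hη : ∀ k, k < K → η k ≠ 0) {t : ℕ → ℕ → 𝕜}
    (ht_diag : ∀ i, i < K → t (i + 1) i = 1 + (2 * α i - 1) / α (i + 1))
    (ht_off : ∀ i j, j < i → i < K →
      t (i + 1) j = t (j + 1) j + ∑ k ∈ Icc (j + 1) i, (2 * α j - t k j) / α (k + 1))
    {v x y z g : ℕ → E} (hz0 : z 0 = x 0)
    (hz : ∀ k, k < K → z (k + 1) = x k + (1 / γ k) • (y (k + 1) - y k))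
    (hx : ∀ k, k < K → x (k + 1) = z (k + 1) + ((α k - 1) / α (k + 1)) • (z (k + 1) - z k)
        + (α k / α (k + 1)) • (z (k + 1) - x k))
    (hg : ∀ j, j < K → g j = (1 / (η j * γ j)) • (y j - (η j * γ j) • v j - y (j + 1))) :
    ∀ i, i < K →
      x (i + 1) = x 0 - ∑ j ∈ range (i + 1), (t (i + 1) j * η j) • v j
        - ∑ j ∈ range (i + 1), (t (i + 1) j * η j) • g j := by
  intro i hi
  have step : ∀ j ∈ range (i + 1),
      (t (i + 1) j * η j) • v j + (t (i + 1) j * η j) • g j =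
        -(t (i + 1) j • (1 / γ j) • (y (j + 1) - y j)) := by
    intro j hj
    have hjK : j < K := by have := mem_range.mp hj; lia
    rw [mul_smul, mul_smul, ← smul_add, hg j hjK,
      smul_add_smul_prox_residual (hγ j hjK) (hη j hjK), smul_neg]
  rw [sub_sub, ← sum_add_distrib, sum_congr rfl step, sum_neg_distrib, sub_neg_eq_add]
  exact eq_add_sum_of_momentumStep hα ht_diag ht_off hz0 hz hx (i + 1) hi

/-- Closed form for the `x`-iterates of IOptISTA:
`x_{i+1} = x_0 - ∑_{j=0}^{i} t_{i+1,j} η_j W(∇f(x_j)) - ∑_{j=0}^{i} t_{i+1,j} η_j h'_{j+1}`,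
where `h'_{j+1} = (1/(η_j γ_j)) (y_j - η_j γ_j W(∇f(x_j)) - y_{j+1})`. -/
theorem stmt_6 {E : Type*} [NormedAddCommGroup E] [InnerProductSpace ℝ E] [CompleteSpace E]
    (f : E → ℝ) (f' : E → E) (hf : ∀ x, HasGradientAt f (f' x) x)
    (h : E → ℝ) (hconv : ConvexOn ℝ Set.univ h)
    (W : E →L[ℝ] E)
    (K : ℕ) (hK : 1 ≤ K)
    (α : ℕ → ℝ) (hαpos : ∀ k, k ≤ K → 0 < α k) (hα0 : α 0 = 1)
    (γ η : ℕ → ℝ) (hγ : ∀ k, k < K → 0 < γ k) (hη : ∀ k, k < K → 0 < η k)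
    (t : ℕ → ℕ → ℝ)
    (ht_diag : ∀ i, i < K → t (i + 1) i = 1 + (2 * α i - 1) / α (i + 1))
    (ht_off : ∀ i j, j < i → i < K →
      t (i + 1) j = t (j + 1) j + ∑ k ∈ Finset.Icc (j + 1) i, (2 * α j - t k j) / α (k + 1))
    (x y z : ℕ → E)
    (hxy0 : x 0 = y 0) (hz0 : z 0 = x 0)
    (hprox : ∀ k, k < K → ∀ u : E,
      h (y (k + 1)) + 1 / (2 * (γ k * η k)) * ‖y (k + 1) - (y k - (γ k * η k) • W (f' (x k)))‖ ^ 2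
        ≤ h u + 1 / (2 * (γ k * η k)) * ‖u - (y k - (γ k * η k) • W (f' (x k)))‖ ^ 2)
    (hz : ∀ k, k < K → z (k + 1) = x k + (1 / γ k) • (y (k + 1) - y k))
    (hx : ∀ k, k < K → x (k + 1) = z (k + 1) + ((α k - 1) / α (k + 1)) • (z (k + 1) - z k)
        + (α k / α (k + 1)) • (z (k + 1) - x k))
    (g : ℕ → E)
    (hg : ∀ j, j < K →
      g j = (1 / (η j * γ j)) • (y j - (η j * γ j) • W (f' (x j)) - y (j + 1))) :
    ∀ i, i < K →
      x (i + 1) = x 0 - ∑ j ∈ Finset.range (i + 1), (t (i + 1) j * η j) • W (f' (x j))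
        - ∑ j ∈ Finset.range (i + 1), (t (i + 1) j * η j) • g j :=
  stmt_6_general (fun k hk => (hαpos (k + 1) hk).ne') (fun k hk => (hγ k hk).ne')
    (fun k hk => (hη k hk).ne') ht_diag ht_off hz0 hz hx hg
end

section
/- Consider the IOptISTA iterates as in the context, where α_0,…,α_K is the specific sequence defined there and the step parameters are γ_k = (2α_k/α_K²)(α_K² − 2α_k² + α_k) for 0 ≤ k ≤ K−1, with arbitrary positive η_0,…,η_{K−1} (assume each γ_k > 0). Then the final iterates coincide: x_K = y_K. -/
/-!
Put `w k = α k • x k - (α k - 1) • z k`. The momentum rule says exactly that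
`w (k + 1) = w k + 2 α k • (z (k + 1) - x k)`, while `y` moves along the same vector
`z (k + 1) - x k` with coefficient `γ k`. The choice of `γ` makes
`(α K)² • (w k - y k) = 2 ((α k)² - α k) • (w k - z k)` an invariant for `k < K`, where
`(α (k + 1))² - α (k + 1) = (α k)²`. The last recurrence for `α` has an extra factor `2`, so at
`k = K` the invariant loses its factor `2`; since `w K - z K = α K • (x K - z K)`, it then reads
`(α K)² • x K = (α K)² • y K`.
-/

namespace IOptISTA

section Module

variable {R M : Type*} [CommRing R] [AddCommGroup M] [Module R M]
  {α γ : ℕ → R} {x y z : ℕ → M} {c : R} {k n : ℕ}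

/-- The extrapolated point `w k = α k • x k - (α k - 1) • z k`: the affine combination of the
iterates `x k` and `z k` in terms of which the momentum rule becomes a plain increment. -/
def auxPoint (α : ℕ → R) (x z : ℕ → M) (k : ℕ) : M :=
  α k • x k - (α k - 1) • z k

theorem smul_auxPoint_sub_succ_of_smul_auxPoint_sub
    (hγ : c * γ k = 2 * α k * (c - 2 * α k ^ 2 + α k))
    (hy : y (k + 1) = y k + γ k • (z (k + 1) - x k))
    (hw : auxPoint α x z (k + 1) = auxPoint α x z k + (2 * α k) • (z (k + 1) - x k))
    (hk : c • (auxPoint α x z k - y k) =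
      (2 * (α k ^ 2 - α k)) • (auxPoint α x z k - z k)) :
    c • (auxPoint α x z (k + 1) - y (k + 1)) =
      (2 * α k ^ 2) • (auxPoint α x z (k + 1) - z (k + 1)) :=
  calc
    c • (auxPoint α x z (k + 1) - y (k + 1))
      = c • (auxPoint α x z k - y k) + (2 * α k * c - c * γ k) • (z (k + 1) - x k) := by
        rw [hw, hy]
        module
    _ = (2 * (α k ^ 2 - α k)) • (auxPoint α x z k - z k) +
          (2 * α k * (2 * α k ^ 2 - α k)) • (z (k + 1) - x k) := by
        rw [hk, hγ]
        module
    _ = (2 * α k ^ 2) • (auxPoint α x z (k + 1) - z (k + 1)) := by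
        rw [hw, auxPoint]
        module

theorem smul_auxPoint_sub_succ
    (hα0 : α 0 = 1) (hα : ∀ k < n, α (k + 1) ^ 2 - α (k + 1) = α k ^ 2)
    (hγ : ∀ k ≤ n, c * γ k = 2 * α k * (c - 2 * α k ^ 2 + α k))
    (hxy0 : x 0 = y 0)
    (hy : ∀ k ≤ n, y (k + 1) = y k + γ k • (z (k + 1) - x k))
    (hw : ∀ k ≤ n,
      auxPoint α x z (k + 1) = auxPoint α x z k + (2 * α k) • (z (k + 1) - x k)) :
    c • (auxPoint α x z (n + 1) - y (n + 1)) =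
      (2 * α n ^ 2) • (auxPoint α x z (n + 1) - z (n + 1)) := by
  suffices invariant : ∀ k ≤ n, c • (auxPoint α x z k - y k) =
      (2 * (α k ^ 2 - α k)) • (auxPoint α x z k - z k) from
    smul_auxPoint_sub_succ_of_smul_auxPoint_sub (hγ n le_rfl) (hy n le_rfl) (hw n le_rfl)
      (invariant n le_rfl)
  intro k hk
  induction k with
  | zero => simp [auxPoint, hα0, hxy0]
  | succ k ih =>
    rw [hα k hk]
    have hkn : k ≤ n := Nat.le_of_succ_le hk
    exact smul_auxPoint_sub_succ_of_smul_auxPoint_sub (hγ k hkn) (hy k hkn) (hw k hkn) (ih hkn)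

theorem sq_smul_eq_sq_smul_of_sq_smul_auxPoint_sub
    (h : α k ^ 2 • (auxPoint α x z k - y k) =
      (α k ^ 2 - α k) • (auxPoint α x z k - z k)) :
    α k ^ 2 • x k = α k ^ 2 • y k :=
  calc
    α k ^ 2 • x k
      = α k ^ 2 • auxPoint α x z k - (α k ^ 2 - α k) • (auxPoint α x z k - z k) := by
        rw [auxPoint]
        module
    _ = α k ^ 2 • y k := by
        rw [← h]
        module

end Module

section Field

variable {𝕜 E : Type*} [Field 𝕜] [AddCommGroup E] [Module 𝕜 E]
  {α γ : ℕ → 𝕜} {x y z : ℕ → E} {k n : ℕ}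

theorem auxPoint_succ (hα : α (k + 1) ≠ 0)
    (hx : x (k + 1) = z (k + 1) + ((α k - 1) / α (k + 1)) • (z (k + 1) - z k)
        + (α k / α (k + 1)) • (z (k + 1) - x k)) :
    auxPoint α x z (k + 1) = auxPoint α x z k + (2 * α k) • (z (k + 1) - x k) := by
  have smul_x : α (k + 1) • x (k + 1) =
      α (k + 1) • z (k + 1) + (α k - 1) • (z (k + 1) - z k) + α k • (z (k + 1) - x k) := by
    rw [hx, smul_add, smul_add, smul_smul, smul_smul, mul_div_cancel₀ _ hα, mul_div_cancel₀ _ hα]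
  rw [auxPoint, auxPoint, smul_x]
  module

theorem last_x_eq_last_y
    (hα_ne : ∀ k ≤ n, α (k + 1) ≠ 0)
    (hα0 : α 0 = 1) (hα : ∀ k < n, α (k + 1) ^ 2 - α (k + 1) = α k ^ 2)
    (hα_last : α (n + 1) ^ 2 - α (n + 1) = 2 * α n ^ 2)
    (hγ : ∀ k ≤ n,
      γ k = 2 * α k / α (n + 1) ^ 2 * (α (n + 1) ^ 2 - 2 * α k ^ 2 + α k))
    (hγ_ne : ∀ k ≤ n, γ k ≠ 0)
    (hxy0 : x 0 = y 0)
    (hz : ∀ k ≤ n, z (k + 1) = x k + (1 / γ k) • (y (k + 1) - y k))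
    (hx : ∀ k ≤ n, x (k + 1) = z (k + 1) + ((α k - 1) / α (k + 1)) • (z (k + 1) - z k)
        + (α k / α (k + 1)) • (z (k + 1) - x k)) :
    x (n + 1) = y (n + 1) := by
  have sq_ne : α (n + 1) ^ 2 ≠ 0 := pow_ne_zero 2 (hα_ne n le_rfl)
  have sq_mul_γ : ∀ k ≤ n,
      α (n + 1) ^ 2 * γ k = 2 * α k * (α (n + 1) ^ 2 - 2 * α k ^ 2 + α k) := by
    intro k hk
    rw [hγ k hk, ← mul_assoc, mul_div_cancel₀ _ sq_ne]
  have y_succ : ∀ k ≤ n, y (k + 1) = y k + γ k • (z (k + 1) - x k) := by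
    intro k hk
    rw [hz k hk, add_sub_cancel_left, one_div, smul_inv_smul₀ (hγ_ne k hk), add_sub_cancel]
  apply smul_right_injective E sq_ne
  apply sq_smul_eq_sq_smul_of_sq_smul_auxPoint_sub (z := z)
  rw [hα_last]
  exact smul_auxPoint_sub_succ hα0 hα sq_mul_γ hxy0 y_succ
    fun k hk ↦ auxPoint_succ (hα_ne k hk) (hx k hk)

end Field

theorem half_one_add_sqrt_sq_sub_self {d : ℝ} (hd : 0 ≤ d) :
    ((1 + √d) / 2) ^ 2 - (1 + √d) / 2 = (d - 1) / 4 := by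
  linear_combination Real.sq_sqrt hd / 4

end IOptISTA

open IOptISTA in
theorem stmt_8_general {E : Type*} [AddCommGroup E] [Module ℝ E]
    (K : ℕ) (hK : 1 ≤ K)
    (α : ℕ → ℝ) (hα0 : α 0 = 1)
    (hαmid : ∀ k, 1 ≤ k → k < K →
      α k = (1 + Real.sqrt (1 + 4 * α (k - 1) ^ 2)) / 2)
    (hαK : α K = (1 + Real.sqrt (1 + 8 * α (K - 1) ^ 2)) / 2)
    (γ : ℕ → ℝ)
    (hγdef : ∀ k, k < K → γ k = 2 * α k / α K ^ 2 * (α K ^ 2 - 2 * α k ^ 2 + α k))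
    (hγ : ∀ k, k < K → γ k ≠ 0)
    (x y z : ℕ → E) (hxy0 : x 0 = y 0)
    (hz : ∀ k, k < K → z (k + 1) = x k + (1 / γ k) • (y (k + 1) - y k))
    (hx : ∀ k, k < K → x (k + 1) = z (k + 1) + ((α k - 1) / α (k + 1)) • (z (k + 1) - z k)
        + (α k / α (k + 1)) • (z (k + 1) - x k)) :
    x K = y K := by
  obtain ⟨n, rfl⟩ := Nat.exists_eq_add_of_le' hK
  have α_succ_ne : ∀ k ≤ n, α (k + 1) ≠ 0 := by
    intro k hk
    rcases hk.lt_or_eq with hkn | rfl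
    · rw [hαmid (k + 1) (by omega) (by omega)]
      positivity
    · rw [hαK]
      positivity
  have α_rec : ∀ k < n, α (k + 1) ^ 2 - α (k + 1) = α k ^ 2 := by
    intro k hk
    rw [hαmid (k + 1) (by omega) (by omega), half_one_add_sqrt_sq_sub_self (by positivity),
      Nat.add_sub_cancel]
    ring
  have α_rec_last : α (n + 1) ^ 2 - α (n + 1) = 2 * α n ^ 2 := by
    rw [hαK, half_one_add_sqrt_sq_sub_self (by positivity), Nat.add_sub_cancel]
    ring
  simp only [Nat.lt_succ_iff] at hγdef hγ hz hx
  exact last_x_eq_last_y α_succ_ne hα0 α_rec α_rec_last hγdef hγ hxy0 hz hx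

/-- Lemma 1 of the paper: with the specific parameter sequence `α` of IOptISTA
and step sizes `γ_k = (2α_k/α_K²)(α_K² - 2α_k² + α_k)`, the final iterates of
the IOptISTA algorithm coincide: `x_K = y_K`. -/
theorem stmt_8 {E : Type*} [NormedAddCommGroup E] [InnerProductSpace ℝ E] [CompleteSpace E]
    (f : E → ℝ) (f' : E → E) (hf : ∀ x, HasGradientAt f (f' x) x)
    (h : E → ℝ) (hconv : ConvexOn ℝ Set.univ h)
    (W : E →L[ℝ] E)
    (K : ℕ) (hK : 1 ≤ K)
    (α : ℕ → ℝ) (hα0 : α 0 = 1)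
    (hαmid : ∀ k, 1 ≤ k → k < K →
      α k = (1 + Real.sqrt (1 + 4 * α (k - 1) ^ 2)) / 2)
    (hαK : α K = (1 + Real.sqrt (1 + 8 * α (K - 1) ^ 2)) / 2)
    (γ : ℕ → ℝ)
    (hγdef : ∀ k, k < K → γ k = 2 * α k / α K ^ 2 * (α K ^ 2 - 2 * α k ^ 2 + α k))
    (hγpos : ∀ k, k < K → 0 < γ k)
    (η : ℕ → ℝ) (hη : ∀ k, k < K → 0 < η k)
    (x y z : ℕ → E)
    (hxy0 : x 0 = y 0) (hz0 : z 0 = x 0)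
    (hprox : ∀ k, k < K → ∀ u : E,
      h (y (k + 1)) + 1 / (2 * (γ k * η k)) * ‖y (k + 1) - (y k - (γ k * η k) • W (f' (x k)))‖ ^ 2
        ≤ h u + 1 / (2 * (γ k * η k)) * ‖u - (y k - (γ k * η k) • W (f' (x k)))‖ ^ 2)
    (hz : ∀ k, k < K → z (k + 1) = x k + (1 / γ k) • (y (k + 1) - y k))
    (hx : ∀ k, k < K → x (k + 1) = z (k + 1) + ((α k - 1) / α (k + 1)) • (z (k + 1) - z k)
        + (α k / α (k + 1)) • (z (k + 1) - x k)) :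
    x K = y K := by
  exact stmt_8_general K hK α hα0 hαmid hαK γ hγdef (fun k hk ↦ (hγpos k hk).ne') x y z hxy0
    hz hx
end
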